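/- Let n ≥ 2, let h : ℝⁿ → ℝⁿ be continuous and injective, let L : ℝⁿ → ℝ be a nonzero linear (or affine) map, and let ψ : ℝ → ℝ be continuous and injective. Set f = ψ ∘ L ∘ h. Then for every y ∈ ℝ, the level set f⁻¹(y) is homeomorphic to an open subset of an (n−1)-dimensional affine hyperplane in ℝⁿ (hence to an open subset of ℝ^{n−1}), and every path component of f⁻¹(y) is unbounded. -/

import Mathlib

open scoped Topology

noncomputable section

/-- `Euc n` is Euclidean space `ℝⁿ`. -/
abbrev Euc (n : ℕ) : Type := EuclideanSpace ℝ (Fin n)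

open MeasureTheory Set Metric Topology

lemma det_interp {n : ℕ} (t : ℕ → ℝ) (ht : Function.Injective t) :
    ∃ w : ℕ → ℝ, ∑ i ∈ Finset.range (n + 1), w i = 1 ∧
      ∀ A : Euc n →L[ℝ] Euc n, (1 + A).det =
        ∑ i ∈ Finset.range (n + 1), w i * (1 + t i • A).det := by
  refine ⟨fun i => (Lagrange.basis (Finset.range (n + 1)) t i).eval 1, ?_, ?_⟩
  · rw [← Polynomial.eval_finsetSum, Lagrange.sum_basis ht.injOn (by simp)]
    simp
  · intro A
    let b := (EuclideanSpace.basisFun (Fin n) ℝ).toBasis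
    let M := LinearMap.toMatrix b b (A : Euc n →ₗ[ℝ] Euc n)
    let p : Polynomial ℝ := Matrix.det
      ((Polynomial.X : Polynomial ℝ) • M.map Polynomial.C + (1 : Matrix _ _ ℝ).map Polynomial.C)
    have hp : ∀ s : ℝ, p.eval s = (1 + s • A).det := by
      intro s
      have h1 : (1 + s • A).det = Matrix.det (1 + s • M) := by
        rw [ContinuousLinearMap.det, ← LinearMap.det_toMatrix b]
        congr 1
        simp [M, LinearMap.toMatrix_one]
      rw [h1, ← Polynomial.coe_evalRingHom, RingHom.map_det]
      congr 1
      ext i j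
      by_cases hij : i = j <;> simp [hij, add_comm, mul_comm s]
    have hdeg : p.degree < (Finset.range (n + 1)).card := by
      have := Polynomial.natDegree_det_X_add_C_le (α := ℝ) M 1
      have h2 : p.natDegree ≤ n := this.trans_eq (Fintype.card_fin n)
      refine lt_of_le_of_lt Polynomial.degree_le_natDegree ?_
      simp only [Finset.card_range]
      exact_mod_cast Nat.lt_succ_of_le h2
    have h3 := Lagrange.eq_interpolate (s := Finset.range (n + 1)) (v := t) ht.injOn hdeg
    have h4 := congrArg (Polynomial.eval 1) h3
    rw [hp, one_smul] at h4
    rw [h4, Lagrange.interpolate_apply, Polynomial.eval_finsetSum]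
    refine Finset.sum_congr rfl fun i _ => ?_
    simp [hp, mul_comm]

/-- small perturbations of the identity preserve the volume of the ball -/
lemma vol_pert {n : ℕ} (r : Euc n → Euc n) (hr : ContDiff ℝ 1 r)
    (h1 : ∀ x, ‖r x‖ = 1) (h2 : ∀ x, ‖x‖ = 1 → r x = x) :
    ∃ t₀ > (0 : ℝ), ∀ t, 0 < t → t < t₀ →
      ∫ x in ball (0 : Euc n) 1, (1 + t • (fderiv ℝ r x - 1)).det =
        (volume (ball (0 : Euc n) 1)).toReal := by
  have hcont : Continuous fun x => fderiv ℝ r x - 1 :=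
    (hr.continuous_fderiv (by norm_num)).sub continuous_const
  obtain ⟨K, hK⟩ := (isCompact_closedBall (0 : Euc n) 1).exists_bound_of_continuousOn
    hcont.continuousOn
  have hdet : ∀ᶠ M in 𝓝 (1 : Euc n →L[ℝ] Euc n), 0 < M.det := by
    refine continuousAt_const.eventually_lt ContinuousLinearMap.continuous_det.continuousAt ?_
    simp [ContinuousLinearMap.det]
  obtain ⟨δ, hδ, hdet⟩ := Metric.eventually_nhds_iff.1 hdet
  have hK0 : 0 ≤ K := (norm_nonneg _).trans (hK 0 (by simp))
  refine ⟨min (min 1 δ) 1 / (K + 1), by positivity, fun t ht htt => ?_⟩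
  rw [lt_div_iff₀ (by positivity)] at htt
  have htK1 : t * (K + 1) < 1 := htt.trans_le (min_le_right _ _)
  have htKδ : t * (K + 1) < δ := htt.trans_le ((min_le_left _ _).trans (min_le_right _ _))
  have ht1 : t < 1 := by nlinarith
  set g : Euc n → Euc n := fun x => x + t • (r x - x) with hg
  have hgd : ∀ x, HasFDerivAt g (1 + t • (fderiv ℝ r x - 1)) x := by
    intro x
    have hrx := (hr.differentiable (by norm_num) x).hasFDerivAt
    exact (hasFDerivAt_id x).add ((hrx.sub (hasFDerivAt_id x)).const_smul t)
  have hpos : ∀ x ∈ closedBall (0 : Euc n) 1, 0 < (1 + t • (fderiv ℝ r x - 1)).det := by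
    intro x hx
    apply hdet
    rw [dist_eq_norm, add_sub_cancel_left, norm_smul, Real.norm_eq_abs, abs_of_pos ht]
    have := hK x hx
    nlinarith
  have hlip : ∀ x ∈ closedBall (0 : Euc n) 1, ∀ y ∈ closedBall (0 : Euc n) 1,
      ‖(r y - y) - (r x - x)‖ ≤ K * ‖y - x‖ := by
    intro x hx y hy
    refine (convex_closedBall (0 : Euc n) 1).norm_image_sub_le_of_norm_hasFDerivWithin_le
      (f := fun x => r x - x) (f' := fun x => fderiv ℝ r x - 1) (fun z _ => ?_) hK hx hy
    have hrx := (hr.differentiable (by norm_num) z).hasFDerivAt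
    exact (hrx.sub (hasFDerivAt_id z)).hasFDerivWithinAt
  have hinj : InjOn g (closedBall (0 : Euc n) 1) := by
    intro x hx y hy hxy
    have h3 := hlip x hx y hy
    have h4 : y - x = - (t • ((r y - y) - (r x - x))) := by
      simp only [hg] at hxy
      have h5 : t • (r x - x) = y + t • (r y - y) - x := by rw [← hxy]; abel
      rw [smul_sub t (r y - y), h5]
      abel
    have h5 : ‖y - x‖ ≤ t * (K * ‖y - x‖) := by
      conv_lhs => rw [h4, norm_neg, norm_smul, Real.norm_eq_abs, abs_of_pos ht]
      gcongr
    by_contra hne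
    have : 0 < ‖y - x‖ := norm_pos_iff.2 (sub_ne_zero.2 (Ne.symm hne))
    nlinarith
  have hmap : ∀ x ∈ ball (0 : Euc n) 1, g x ∈ ball (0 : Euc n) 1 := by
    intro x hx
    rw [mem_ball_zero_iff] at *
    have : g x = (1 - t) • x + t • r x := by simp only [hg]; module
    rw [this]
    refine (norm_add_le _ _).trans_lt ?_
    rw [norm_smul, norm_smul, h1, Real.norm_eq_abs, Real.norm_eq_abs, abs_of_pos ht,
      abs_of_pos (by linarith)]
    nlinarith
  have hgc : Continuous g := by
    have := hr.continuous
    fun_prop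
  have hopen : IsOpen (g '' ball 0 1) := by
    rw [isOpen_iff_mem_nhds]
    rintro _ ⟨x, hx, rfl⟩
    have hs : HasStrictFDerivAt g (1 + t • (fderiv ℝ r x - 1)) x := by
      have hrx := (hr.contDiffAt (x := x)).hasStrictFDerivAt (by norm_num)
      exact (hasStrictFDerivAt_id x).add ((hrx.sub (hasStrictFDerivAt_id x)).const_smul t)
    have hsurj : (1 + t • (fderiv ℝ r x - 1)).range = ⊤ := by
      have := (LinearMap.isUnit_iff_isUnit_det
        ((1 + t • (fderiv ℝ r x - 1) : Euc n →L[ℝ] Euc n) : Euc n →ₗ[ℝ] Euc n)).2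
        (isUnit_iff_ne_zero.2 (hpos x (ball_subset_closedBall hx)).ne')
      exact (LinearMap.isUnit_iff_range_eq_top _).1 this
    rw [← hs.map_nhds_eq_of_surj hsurj]
    exact Filter.image_mem_map (isOpen_ball.mem_nhds hx)
  have himg : g '' ball 0 1 = ball (0 : Euc n) 1 := by
    refine subset_antisymm (by rintro _ ⟨x, hx, rfl⟩; exact hmap x hx) ?_
    have hpre : IsPreconnected (ball (0 : Euc n) 1) := (convex_ball 0 1).isPreconnected
    have hcl : IsClosed (g '' closedBall 0 1) :=
      ((isCompact_closedBall (0 : Euc n) 1).image hgc).isClosed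
    have hsub : ball (0 : Euc n) 1 ∩ g '' closedBall 0 1 ⊆ g '' ball 0 1 := by
      rintro _ ⟨hy, x, hx, rfl⟩
      refine ⟨x, ?_, rfl⟩
      rw [mem_ball_zero_iff] at *
      rw [mem_closedBall_zero_iff] at hx
      rcases hx.lt_or_eq with hx | hx
      · exact hx
      · simp [hg, h2 x hx, hx] at hy
    refine hpre.subset_left_of_subset_union hopen hcl.isOpen_compl ?_ ?_ ?_
    · rw [Set.disjoint_compl_right_iff_subset]
      exact image_mono ball_subset_closedBall
    · intro y hy
      by_cases h : y ∈ g '' closedBall 0 1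
      · exact Or.inl (hsub ⟨hy, h⟩)
      · exact Or.inr h
    · exact ⟨g 0, hmap 0 (by simp), mem_image_of_mem _ (by simp)⟩
  have key := integral_image_eq_integral_abs_det_fderiv_smul (volume : Measure (Euc n))
    (s := ball 0 1) measurableSet_ball (fun x _ => (hgd x).hasFDerivWithinAt)
    (hinj.mono ball_subset_closedBall) (fun _ => (1 : ℝ))
  rw [himg] at key
  simp only [smul_eq_mul, mul_one] at key
  rw [setIntegral_congr_fun measurableSet_ball
    (g := fun x => |(1 + t • (fderiv ℝ r x - 1)).det|), ← key]
  · simp [Measure.real]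
  · intro x hx
    exact (abs_of_pos (hpos x (ball_subset_closedBall hx))).symm

lemma no_retraction {n : ℕ} (r : Euc n → Euc n) (hr : ContDiff ℝ 1 r)
    (h1 : ∀ x, ‖r x‖ = 1) (h2 : ∀ x, ‖x‖ = 1 → r x = x) : False := by
  obtain ⟨t₀, ht₀, hv⟩ := vol_pert r hr h1 h2
  have hcont : Continuous fun x => fderiv ℝ r x - 1 :=
    (hr.continuous_fderiv (by norm_num)).sub continuous_const
  let t : ℕ → ℝ := fun i => t₀ / (i + 2)
  have htinj : Function.Injective t := by
    intro i j hij
    simp only [t] at hij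
    rw [div_eq_div_iff (by positivity) (by positivity)] at hij
    have := mul_left_cancel₀ ht₀.ne' hij
    have h : (j : ℝ) = i := by linarith
    exact_mod_cast h.symm
  obtain ⟨w, hw1, hw⟩ := det_interp (n := n) t htinj
  have hz : ∀ x, (1 + (fderiv ℝ r x - 1)).det = 0 := by
    intro x
    rw [add_sub_cancel]
    by_contra hne
    have hsurj := (LinearMap.isUnit_iff_range_eq_top _).1 ((LinearMap.isUnit_iff_isUnit_det
        ((fderiv ℝ r x : Euc n →L[ℝ] Euc n) : Euc n →ₗ[ℝ] Euc n)).2 (isUnit_iff_ne_zero.2 hne))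
    obtain ⟨v, hv⟩ := LinearMap.range_eq_top.1 hsurj (r x)
    have hrx := (hr.differentiable (by norm_num) x).hasFDerivAt
    have h3 := hrx.inner ℝ hrx
    have h4 : (fun y => inner ℝ (r y) (r y)) = fun _ => (1 : ℝ) := by
      ext y; rw [real_inner_self_eq_norm_sq, h1]; norm_num
    rw [h4] at h3
    have h5 := h3.unique (hasFDerivAt_const (1 : ℝ) x)
    have h6 := DFunLike.congr_fun h5 v
    have hv' : fderiv ℝ r x v = r x := hv
    simp [fderivInnerCLM_apply, hv', h1] at h6
  have hint : ∀ s : ℝ, IntegrableOn (fun x => (1 + s • (fderiv ℝ r x - 1)).det)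
      (ball (0 : Euc n) 1) := by
    intro s
    have hc : Continuous (fun x => (1 + s • (fderiv ℝ r x - 1)).det) :=
      ContinuousLinearMap.continuous_det.comp (continuous_const.add (hcont.const_smul s))
    exact (hc.continuousOn.integrableOn_compact (isCompact_closedBall (0 : Euc n) 1)).mono_set
      ball_subset_closedBall
  have h7 : ∫ x in ball (0 : Euc n) 1, (1 + (fderiv ℝ r x - 1)).det = 0 := by
    simp only [hz, integral_zero]
  have h8 : ∫ x in ball (0 : Euc n) 1, (1 + (fderiv ℝ r x - 1)).det =
      ∫ x in ball (0 : Euc n) 1, ∑ i ∈ Finset.range (n + 1),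
        w i * (1 + t i • (fderiv ℝ r x - 1)).det :=
    integral_congr_ae (Filter.Eventually.of_forall fun x => hw _)
  rw [h8] at h7
  rw [integral_finsetSum _ (fun i _ => (hint (t i)).const_mul (w i))] at h7
  simp only [integral_const_mul] at h7
  rw [Finset.sum_congr rfl (g := fun i => w i * (volume (ball (0 : Euc n) 1)).toReal),
    ← Finset.sum_mul, hw1, one_mul] at h7
  · have : 0 < (volume (ball (0 : Euc n) 1)).toReal :=
      ENNReal.toReal_pos (measure_ball_pos _ _ one_pos).ne' measure_ball_lt_top.ne
    linarith
  · intro i _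
    rw [hv (t i) (by positivity)]
    rw [div_lt_iff₀ (by positivity)]
    have : (0 : ℝ) ≤ i := by positivity
    nlinarith

lemma stability {n : ℕ} (F : Euc n → Euc n) (hF : ContinuousOn F (closedBall 0 1))
    (hd : ∀ x ∈ closedBall (0 : Euc n) 1, ‖F x - x‖ ≤ 1 / 2) :
    ∃ x ∈ closedBall (0 : Euc n) 1, F x = 0 := by
  by_contra! hne
  obtain ⟨G, hG⟩ := ContinuousMap.exists_restrict_eq (isClosed_closedBall (x := (0 : Euc n)) (ε := 1))
    ⟨(closedBall (0 : Euc n) 1).domRestrict F, hF.domRestrict⟩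
  have hGF : ∀ x ∈ closedBall (0 : Euc n) 1, G x = F x := fun x hx =>
    DFunLike.congr_fun hG ⟨x, hx⟩
  obtain ⟨δ, hδ, hδG⟩ := (isCompact_closedBall (0 : Euc n) 1).exists_forall_le'
    (f := fun x => ‖G x‖) G.continuous.norm.continuousOn (a := 0)
    (fun x hx => by rw [hGF x hx]; exact norm_pos_iff.2 (hne x hx))
  obtain ⟨P, hP, hPG, -⟩ := G.continuous.exists_contDiff_approx (n := 1)
    (ε := fun _ => min δ (1 / 10)) continuous_const (fun _ => by positivity)
  let b : ContDiffBump (0 : Euc n) := ⟨7 / 10, 9 / 10, by norm_num, by norm_num⟩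
  let g : Euc n → Euc n := fun x => x + b x • (P x - x)
  have hP1 : ∀ x, ‖P x - G x‖ < δ ∧ ‖P x - G x‖ < 1 / 10 := fun x => by
    have := hPG x
    rw [dist_eq_norm] at this
    exact lt_min_iff.1 this
  have hout : ∀ x, 9 / 10 ≤ ‖x‖ → g x = x := by
    intro x hx
    have : b x = 0 := b.zero_of_le_dist (by simpa using hx)
    simp [g, this]
  have hg0 : ∀ x, g x ≠ 0 := by
    intro x hx
    rcases le_or_gt ‖x‖ (7 / 10) with h | h
    · have : b x = 1 := b.one_of_mem_closedBall (by simpa using h)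
      simp only [g, this, one_smul, add_sub_cancel] at hx
      have h1 := hP1 x
      have h2 := hδG x (by simpa using h.trans (by norm_num))
      simp only [hx, zero_sub, norm_neg] at h1
      linarith
    · rcases le_or_gt ‖x‖ 1 with h' | h'
      · have hxm : x ∈ closedBall (0 : Euc n) 1 := by simpa using h'
        have h1 := (hP1 x).2
        have h2 := hd x hxm
        rw [← hGF x hxm] at h2
        have h3 : ‖P x - x‖ ≤ 6 / 10 := by
          have := norm_sub_le_norm_sub_add_norm_sub (P x) (G x) x
          linarith
        have h4 : x = - (b x • (P x - x)) := eq_neg_of_add_eq_zero_left hx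
        have h5 : ‖x‖ ≤ 1 * ‖P x - x‖ := by
          conv_lhs => rw [h4, norm_neg, norm_smul, Real.norm_eq_abs, abs_of_nonneg b.nonneg]
          gcongr
          exact b.le_one
        linarith
      · rw [hout x (by linarith)] at hx
        simp [hx] at h'
        linarith
  have hg : ContDiff ℝ 1 g := by
    have hP' : ContDiff ℝ 1 P := by exact_mod_cast hP
    exact contDiff_id.add (b.contDiff.smul (hP'.sub contDiff_id))
  refine no_retraction (fun x => ‖g x‖⁻¹ • g x) ?_ ?_ ?_
  · exact ((hg.norm ℝ hg0).inv fun x => norm_ne_zero_iff.2 (hg0 x)).smul hg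
  · intro x
    rw [norm_smul, norm_inv, norm_norm, inv_mul_cancel₀ (norm_ne_zero_iff.2 (hg0 x))]
  · intro x hx
    have := hout x (by linarith)
    simp [this, hx]

lemma image_mem_nhds_zero {n : ℕ} (f : Euc n → Euc n) (hf : Continuous f)
    (hinj : Function.Injective f) : f '' closedBall 0 1 ∈ 𝓝 (f 0) := by
  by_contra hnot
  have he : IsClosedEmbedding (fun x : closedBall (0 : Euc n) 1 => f x) :=
    (hf.comp continuous_subtype_val).isClosedEmbedding
      (hinj.comp Subtype.val_injective)
  obtain ⟨G, hG⟩ := ContinuousMap.exists_extension' he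
    ⟨Subtype.val, continuous_subtype_val⟩
  have hGf : ∀ x ∈ closedBall (0 : Euc n) 1, G (f x) = x := fun x hx =>
    congrFun hG ⟨x, hx⟩
  have hG0 : G (f 0) = 0 := hGf 0 (by simp)
  obtain ⟨ε', hε', hGε'⟩ := Metric.continuousAt_iff.1 (G.continuous.continuousAt (x := f 0))
    (1 / 10) (by norm_num)
  obtain ⟨ε, hε, rfl⟩ : ∃ ε > 0, ε' = 3 * ε := ⟨ε' / 3, by positivity, by ring⟩
  have hGε : ∀ y, dist y (f 0) < 3 * ε → ‖G y‖ < 1 / 10 := fun y hy => by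
    simpa [hG0] using hGε' hy
  obtain ⟨c, hc, hcf⟩ : ∃ c ∈ ball (f 0) ε, c ∉ f '' closedBall 0 1 := by
    by_contra! h
    exact hnot (Filter.mem_of_superset (ball_mem_nhds _ hε) h)
  rw [mem_ball] at hc
  have hK1 : IsCompact (f '' closedBall 0 1 \ ball c ε) :=
    ((isCompact_closedBall (0 : Euc n) 1).image hf).diff isOpen_ball
  obtain ⟨δ, hδ, hδG⟩ := hK1.exists_forall_le'
    (f := fun x => ‖G x‖) G.continuous.norm.continuousOn (a := 0) (by
      rintro _ ⟨⟨x, hx, rfl⟩, hx2⟩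
      rw [hGf x hx, norm_pos_iff]
      rintro rfl
      exact hx2 (by rwa [mem_ball, dist_comm]))
  obtain ⟨P, hP, hPG, -⟩ := G.continuous.exists_contDiff_approx (n := 1)
    (ε := fun _ => min (δ / 2) (1 / 10)) continuous_const (fun _ => by positivity)
  have hP' : ContDiff ℝ 1 P := by exact_mod_cast hP
  have hnull : volume (P '' sphere c ε) = 0 :=
    addHaar_image_eq_zero_of_differentiableOn_of_addHaar_eq_zero _
      (hP'.differentiable (by norm_num)).differentiableOn
      (Measure.addHaar_sphere_of_ne_zero _ _ hε.ne')
  obtain ⟨v, hv, hvP⟩ : ∃ v ∈ ball (0 : Euc n) (min (δ / 2) (1 / 10)), v ∉ P '' sphere c ε := by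
    by_contra! h
    have h1 := measure_mono_null h hnull
    exact (measure_ball_pos volume (0 : Euc n) (by positivity)).ne' h1
  rw [mem_ball_zero_iff] at hv
  have hQ : ∀ y, ‖P y - v - G y‖ < δ ∧ ‖P y - v - G y‖ < 2 / 10 := by
    intro y
    have h1 := hPG y
    rw [dist_eq_norm] at h1
    have h2 : ‖P y - v - G y‖ ≤ ‖P y - G y‖ + ‖v‖ := by
      rw [sub_right_comm]; exact norm_sub_le _ _
    have h3 := lt_min_iff.1 h1
    have h4 := lt_min_iff.1 hv
    constructor <;> linarith [h3.1, h3.2, h4.1, h4.2]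
  let Φ : Euc n → Euc n := fun y => c + max 1 (ε / ‖y - c‖) • (y - c)
  have hfc : ∀ x ∈ closedBall (0 : Euc n) 1, 0 < ‖f x - c‖ := by
    intro x hx
    rw [norm_pos_iff, sub_ne_zero]
    rintro rfl
    exact hcf ⟨x, hx, rfl⟩
  have hΦ1 : ∀ x ∈ closedBall (0 : Euc n) 1, ε ≤ ‖f x - c‖ → Φ (f x) = f x := by
    intro x hx h
    have : ε / ‖f x - c‖ ≤ 1 := (div_le_one (hfc x hx)).2 h
    simp [Φ, max_eq_left this]
  have hΦ2 : ∀ x ∈ closedBall (0 : Euc n) 1, ‖f x - c‖ < ε → ‖Φ (f x) - c‖ = ε := by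
    intro x hx h
    have : 1 ≤ ε / ‖f x - c‖ := (one_le_div (hfc x hx)).2 h.le
    simp only [Φ, max_eq_right this, add_sub_cancel_left, norm_smul, norm_div, norm_norm]
    rw [div_mul_cancel₀ _ (hfc x hx).ne', Real.norm_eq_abs, abs_of_pos hε]
  obtain ⟨x, hx, hx0⟩ := stability (fun x => P (Φ (f x)) - v) (by
      refine (hP'.continuous.comp_continuousOn ?_).sub continuousOn_const
      have h1 : ContinuousOn (fun x => ε / ‖f x - c‖) (closedBall 0 1) :=
        continuousOn_const.div (hf.sub continuous_const).norm.continuousOn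
          fun x hx => (hfc x hx).ne'
      exact continuousOn_const.add
        ((ContinuousOn.sup continuousOn_const h1).smul (hf.sub continuous_const).continuousOn))
    (by
      intro x hx
      rcases le_or_gt ε ‖f x - c‖ with h | h
      · have := (hQ (f x)).2
        rw [hGf x hx] at this
        simp only [hΦ1 x hx h]
        linarith
      · have h1 := hΦ2 x hx h
        have h2 : ‖G (Φ (f x))‖ < 1 / 10 := by
          apply hGε
          have := dist_triangle (Φ (f x)) c (f 0)
          rw [dist_eq_norm (Φ (f x)) c, h1] at this
          linarith
        have h3 : ‖x‖ < 1 / 10 := by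
          rw [← hGf x hx]
          apply hGε
          have := dist_triangle (f x) c (f 0)
          rw [dist_eq_norm (f x) c] at this
          linarith
        have h4 := (hQ (Φ (f x))).2
        have h5 : ‖P (Φ (f x)) - v - x‖ ≤ ‖P (Φ (f x)) - v - G (Φ (f x))‖ + ‖G (Φ (f x))‖ + ‖x‖ := by
          have : P (Φ (f x)) - v - x = (P (Φ (f x)) - v - G (Φ (f x))) + G (Φ (f x)) - x := by abel
          rw [this]
          exact (norm_sub_le _ _).trans (by gcongr; exact norm_add_le _ _)
        linarith)
  rcases le_or_gt ε ‖f x - c‖ with h | h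
  · rw [hΦ1 x hx h] at hx0
    have h1 := (hQ (f x)).1
    rw [hx0, zero_sub, norm_neg] at h1
    have h2 := hδG (f x) ⟨⟨x, hx, rfl⟩, by simpa [dist_eq_norm] using h⟩
    linarith
  · exact hvP ⟨Φ (f x), by simpa [dist_eq_norm] using hΦ2 x hx h, sub_eq_zero.1 hx0⟩

/-- invariance of domain -/
lemma invariance_of_domain {n : ℕ} (f : Euc n → Euc n) (hf : Continuous f)
    (hinj : Function.Injective f) : IsOpenMap f := by
  rw [isOpenMap_iff_nhds_le]
  intro x s hs
  obtain ⟨ε, hε, hεs⟩ := Metric.nhds_basis_closedBall.mem_iff.1 (Filter.mem_map.1 hs)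
  have := image_mem_nhds_zero (fun z => f (x + ε • z)) (by fun_prop) (by
    intro a b hab
    have := add_left_cancel (hinj hab)
    exact smul_right_injective _ hε.ne' this)
  simp only [smul_zero, add_zero] at this
  refine Filter.mem_of_superset this ?_
  rintro _ ⟨z, hz, rfl⟩
  apply hεs
  rw [mem_closedBall_zero_iff] at hz
  simp only [mem_closedBall, dist_self_add_left, norm_smul, Real.norm_eq_abs, abs_of_pos hε]
  nlinarith

/-- **Statement 8.** Let `n ≥ 2`, let `h : ℝⁿ → ℝⁿ` be continuous and
injective, let `L : ℝⁿ → ℝ` be an affine map with nonzero linear part, and let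
`ψ : ℝ → ℝ` be continuous and injective. Set `f = ψ ∘ L ∘ h`. Then for every
`y ∈ ℝ`, the level set `f⁻¹(y)` is homeomorphic to an open subset of
`ℝ^{n-1}`, and every path component of `f⁻¹(y)` is unbounded. -/
theorem generic_composition_level_sets
    {n : ℕ} (hn : 2 ≤ n)
    (h : Euc n → Euc n) (hc : Continuous h) (hinj : Function.Injective h)
    (L : Euc n →ᵃ[ℝ] ℝ) (hL : L.linear ≠ 0)
    (ψ : ℝ → ℝ) (hψc : Continuous ψ) (hψi : Function.Injective ψ)
    (f : Euc n → ℝ) (hf : f = fun x => ψ (L (h x))) (y : ℝ) :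
    (∃ U : Set (Euc (n - 1)), IsOpen U ∧ Nonempty (↥(f ⁻¹' {y}) ≃ₜ ↥U)) ∧
    ∀ x ∈ f ⁻¹' {y},
      ¬ Bornology.IsBounded {z | JoinedIn (f ⁻¹' {y}) x z} := by
  have hLc : Continuous L := L.continuous_of_finiteDimensional
  have hfc : Continuous f := by rw [hf]; exact hψc.comp (hLc.comp hc)
  have hcl : IsClosed (f ⁻¹' {y}) := isClosed_singleton.preimage hfc
  have hemb : IsOpenEmbedding h := .of_continuous_injective_isOpenMap hc hinj
    (invariance_of_domain h hc hinj)
  have part1 : ∃ U : Set (Euc (n - 1)), IsOpen U ∧ Nonempty (↥(f ⁻¹' {y}) ≃ₜ ↥U) := by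
    rcases (f ⁻¹' {y}).eq_empty_or_nonempty with hemp | ⟨x₀, hx₀⟩
    · rw [hemp]
      exact ⟨∅, isOpen_empty, ⟨Homeomorph.empty⟩⟩
    · have hS : ∀ x, x ∈ f ⁻¹' {y} ↔ L.linear (h x - h x₀) = 0 := by
        intro x
        rw [← vsub_eq_sub (h x), L.linearMap_vsub, vsub_eq_sub, sub_eq_zero, ← hψi.eq_iff]
        rw [mem_preimage, mem_singleton_iff, hf] at *
        simp only at hx₀ ⊢
        rw [hx₀]
      let H := L.linear.ker
      have hfr : Module.finrank ℝ H = n - 1 := by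
        have h1 := L.linear.finrank_range_add_finrank_ker
        have h2 : L.linear.range = ⊤ := LinearMap.range_eq_top.2 (LinearMap.surjective hL)
        rw [h2, finrank_top, Module.finrank_self, finrank_euclideanSpace_fin] at h1
        change Module.finrank ℝ L.linear.ker = n - 1
        omega
      let φ : H ≃ₗᵢ[ℝ] Euc (n - 1) := ((stdOrthonormalBasis ℝ H).reindex (finCongr hfr)).repr
      let e : Euc (n - 1) → Euc n := fun v => h x₀ + (φ.symm v : Euc n)
      have he : IsEmbedding e := by
        have h1 : Isometry e := by
          refine Isometry.of_dist_eq fun a b => ?_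
          simp only [e, dist_add_left]
          exact φ.symm.isometry.dist_eq a b
        exact h1.isEmbedding
      refine ⟨e ⁻¹' range h, hemb.isOpen_range.preimage he.continuous, ?_⟩
      have himg : h '' (f ⁻¹' {y}) = e '' (e ⁻¹' range h) := by
        ext z
        constructor
        · rintro ⟨x, hx, rfl⟩
          have hk := (hS x).1 hx
          have hez : e (φ ⟨h x - h x₀, hk⟩) = h x := by simp [e]
          exact ⟨φ ⟨h x - h x₀, hk⟩, by rw [mem_preimage, hez]; exact mem_range_self x, hez⟩
        · rintro ⟨v, ⟨x, hx⟩, rfl⟩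
          refine ⟨x, (hS x).2 ?_, hx⟩
          rw [hx]
          simp only [e, add_sub_cancel_left]
          exact (φ.symm v).2
      exact ⟨(hemb.isEmbedding.homeomorphImage _).trans
        ((Homeomorph.setCongr himg).trans (he.homeomorphImage _).symm)⟩
  refine ⟨part1, ?_⟩
  intro x hx hb
  obtain ⟨U, hU, ⟨θ⟩⟩ := part1
  let j : ↥(f ⁻¹' {y}) → Euc (n - 1) := fun s => (θ s : Euc (n - 1))
  have hj : IsOpenEmbedding j := hU.isOpenEmbedding_subtypeVal.comp θ.isOpenEmbedding
  haveI := hj.locallyPathConnectedSpace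
  let C := pathComponent (⟨x, hx⟩ : ↥(f ⁻¹' {y}))
  have hclopen : IsClopen C := IsClopen.pathComponent _
  have hCimg : Subtype.val '' C ⊆ {z | JoinedIn (f ⁻¹' {y}) x z} := by
    rintro _ ⟨z, hz, rfl⟩
    rw [mem_setOf, joinedIn_iff_joined hx z.2]
    exact hz
  have hCc : IsCompact C := by
    rw [Subtype.isCompact_iff]
    exact isCompact_of_isClosed_isBounded (hcl.isClosedMap_subtype_val _ hclopen.1)
      (hb.subset hCimg)
  have hjC : IsCompact (j '' C) := hCc.image hj.continuous
  have huniv : j '' C = univ := by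
    refine IsClopen.eq_univ ⟨hjC.isClosed, hj.isOpenMap _ hclopen.2⟩ ?_
    exact ⟨j ⟨x, hx⟩, mem_image_of_mem _ (mem_pathComponent_self _)⟩
  rw [huniv] at hjC
  haveI : Nonempty (Fin (n - 1)) := ⟨⟨0, by omega⟩⟩
  exact noncompact_univ (Euc (n - 1)) hjC
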